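/- Let $c \in [-2,2]$ and let $V$ be a random variable on $[-1,1]$ with density $\tfrac12(1 + \tfrac{c}{2}v)$ with respect to Lebesgue measure on $[-1,1]$. Then for all $t \in \mathbb{R}$, $\mathbb{E}\, e^{tV} \le \exp(ct/6 + t^2/6)$. -/

import Mathlib

open MeasureTheory

lemma aux_mono {f f' : ℝ → ℝ} (h0 : f 0 = 0) (hd : ∀ x, HasDerivAt f (f' x) x)
    (hn : ∀ x, 0 < x → 0 ≤ f' x) {x : ℝ} (hx : 0 ≤ x) : 0 ≤ f x := by
  have hm : MonotoneOn f (Set.Ici 0) := by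
    apply monotoneOn_of_deriv_nonneg (convex_Ici 0)
    · exact fun y _ => (hd y).continuousAt.continuousWithinAt
    · exact fun y _ => (hd y).differentiableAt.differentiableWithinAt
    · intro y hy
      rw [interior_Ici] at hy
      rw [(hd y).deriv]
      exact hn y hy
  have := hm (Set.mem_Ici.2 le_rfl) (Set.mem_Ici.2 hx) hx
  rwa [h0] at this

lemma D_deriv (x : ℝ) :
    HasDerivAt (fun x => x * Real.cosh x - Real.sinh x) (x * Real.sinh x) x := by
  have := ((hasDerivAt_id x).mul (Real.hasDerivAt_cosh x)).sub (Real.hasDerivAt_sinh x)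
  refine this.congr_deriv ?_
  simp

lemma D_lower {x : ℝ} (hx : 0 ≤ x) : x ^ 3 / 3 ≤ x * Real.cosh x - Real.sinh x := by
  have := aux_mono (f := fun x => (x * Real.cosh x - Real.sinh x) - x ^ 3 / 3)
    (f' := fun x => x * Real.sinh x - x ^ 2) (by simp)
    (fun y => by
      have := (D_deriv y).sub ((hasDerivAt_pow 3 y).div_const 3)
      refine this.congr_deriv ?_
      push_cast
      ring) (fun y hy => by
        have := Real.self_le_sinh_iff.2 hy.le
        nlinarith) hx
  linarith

lemma S_upper {x : ℝ} (hx : 0 ≤ x) : Real.sinh x ≤ x * Real.cosh x := by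
  have := D_lower hx
  have : 0 ≤ x ^ 3 := by positivity
  linarith

lemma D_upper {x : ℝ} (hx : 0 ≤ x) :
    x * Real.cosh x - Real.sinh x ≤ x ^ 3 / 3 * Real.cosh x := by
  have := aux_mono (f := fun x => x ^ 3 / 3 * Real.cosh x - (x * Real.cosh x - Real.sinh x))
    (f' := fun x => (x ^ 2 * Real.cosh x + x ^ 3 / 3 * Real.sinh x) - x * Real.sinh x) (by simp)
    (fun y => by
      have := (((hasDerivAt_pow 3 y).div_const 3).mul (Real.hasDerivAt_cosh y)).sub (D_deriv y)
      refine this.congr_deriv ?_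
      push_cast
      ring) (fun y hy => by
        have h1 := S_upper hy.le
        have h2 := Real.sinh_nonneg_iff.2 hy.le
        have h3 : 0 ≤ y ^ 3 / 3 * Real.sinh y := by positivity
        nlinarith) hx
  linarith

noncomputable def FF (t : ℝ) : ℝ :=
  1 - t ^ 2 * Real.sinh t / (3 * (t * Real.cosh t - Real.sinh t)) + t ^ 2 / 6
    - (Real.log (t * Real.cosh t - Real.sinh t) + Real.log 3 - 3 * Real.log t)

lemma D_pos {x : ℝ} (hx : 0 < x) : 0 < x * Real.cosh x - Real.sinh x :=
  lt_of_lt_of_le (by positivity) (D_lower hx.le)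

lemma FF_deriv {x : ℝ} (hx : 0 < x) : HasDerivAt FF
    ((x ^ 2 * Real.sinh x - 3 * (x * Real.cosh x - Real.sinh x)) ^ 2 /
      (3 * x * (x * Real.cosh x - Real.sinh x) ^ 2)) x := by
  have hD := D_pos hx
  have h1 := (((hasDerivAt_pow 2 x).mul (Real.hasDerivAt_sinh x)).div
    ((D_deriv x).const_mul 3) (by positivity))
  have h2 := (((h1.const_sub 1).add ((hasDerivAt_pow 2 x).div_const 6)).sub
    ((((D_deriv x).log hD.ne').add_const (Real.log 3)).sub
      ((Real.hasDerivAt_log hx.ne').const_mul 3)))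
  refine h2.congr_deriv ?_
  symm
  have hC := Real.cosh_sq x
  have hne := hD.ne'
  simp only [Pi.mul_apply]
  generalize hDD : x * Real.cosh x - Real.sinh x = D at *
  have hS : Real.sinh x = x * Real.cosh x - D := by linarith
  generalize Real.cosh x = C at *
  generalize Real.sinh x = S at *
  field_simp
  subst hS
  push_cast
  ring_nf
  try (ring_nf at hC; linear_combination (0:ℝ) * hC)

lemma FF_mono {s t : ℝ} (hs : 0 < s) (hst : s ≤ t) : FF s ≤ FF t := by
  have hm : MonotoneOn FF (Set.Ioi 0) := by
    apply monotoneOn_of_deriv_nonneg (convex_Ioi 0)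
    · exact fun y hy => (FF_deriv hy).continuousAt.continuousWithinAt
    · intro y hy
      rw [interior_Ioi] at hy
      exact (FF_deriv hy).differentiableAt.differentiableWithinAt
    · intro y hy
      rw [interior_Ioi] at hy
      rw [(FF_deriv hy).deriv]
      have : (0:ℝ) < y := hy
      positivity
  exact hm hs (lt_of_lt_of_le hs hst) hst

lemma FF_lower {s : ℝ} (hs : 0 < s) : 1 - Real.cosh s - Real.log (Real.cosh s) ≤ FF s := by
  have hD := D_pos hs
  have h1 := D_lower hs.le
  have h2 := D_upper hs.le
  have h3 := S_upper hs.le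
  have hc := Real.cosh_pos s
  have hlog : Real.log (s * Real.cosh s - Real.sinh s) + Real.log 3 - 3 * Real.log s
      ≤ Real.log (Real.cosh s) := by
    have := Real.log_le_log hD h2
    rw [Real.log_mul (by positivity) (by positivity), Real.log_div (by positivity) (by positivity),
      Real.log_pow] at this
    push_cast at this
    linarith
  have hq : s ^ 2 * Real.sinh s / (3 * (s * Real.cosh s - Real.sinh s)) ≤ Real.cosh s := by
    rw [div_le_iff₀ (by positivity)]
    have e1 : s ^ 2 * Real.sinh s ≤ s ^ 2 * (s * Real.cosh s) := by gcongr
    have e2 := mul_le_mul_of_nonneg_left h1 hc.le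
    nlinarith
  unfold FF
  have : 0 ≤ s ^ 2 / 6 := by positivity
  linarith

lemma FF_nonneg {t : ℝ} (ht : 0 < t) : 0 ≤ FF t := by
  have hlim : Filter.Tendsto (fun s => 1 - Real.cosh s - Real.log (Real.cosh s))
      (nhdsWithin 0 (Set.Ioi 0)) (nhds 0) := by
    have hcont : Continuous (fun s => 1 - Real.cosh s - Real.log (Real.cosh s)) :=
      (continuous_const.sub Real.continuous_cosh).sub
        (Real.continuous_cosh.log (fun x => (Real.cosh_pos x).ne'))
    have := (hcont.tendsto 0).mono_left (nhdsWithin_le_nhds (s := Set.Ioi 0))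
    simpa using this
  apply le_of_tendsto hlim
  filter_upwards [Ioc_mem_nhdsGT ht] with s hs
  exact (FF_lower hs.1).trans (FF_mono hs.1 hs.2)

lemma closed_bound (c : ℝ) {t : ℝ} (ht : 0 < t) :
    Real.sinh t / t + c / 2 * ((t * Real.cosh t - Real.sinh t) / t ^ 2) ≤
      Real.exp (c * t / 6 + t ^ 2 / 6) := by
  have hF := FF_nonneg ht
  have hD := D_pos ht
  unfold FF at hF
  generalize hDD : t * Real.cosh t - Real.sinh t = D at *
  set l := Real.log D + Real.log 3 - 3 * Real.log t with hl
  have hb : Real.exp l = 3 * D / t ^ 3 := by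
    have : l = Real.log (3 * D / t ^ 3) := by
      rw [Real.log_div (by positivity) (by positivity), Real.log_mul (by positivity) (by positivity),
        Real.log_pow, hl]
      push_cast
      ring
    rw [this, Real.exp_log (by positivity)]
  have he := Real.add_one_le_exp (c * t / 6 + t ^ 2 / 6 - l)
  calc _ = 3 * D / t ^ 3 * (c * t / 6 + t ^ 2 * Real.sinh t / (3 * D)) := by
        field_simp
        ring
    _ ≤ 3 * D / t ^ 3 * Real.exp (c * t / 6 + t ^ 2 / 6 - l) := by
        gcongr
        linarith
    _ = _ := by
        rw [← hb, ← Real.exp_add]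
        congr 1
        ring

lemma int_formula (c : ℝ) {t : ℝ} (ht : t ≠ 0) :
    (∫ v in (-1 : ℝ)..1, Real.exp (t * v) * ((1 + c / 2 * v) / 2)) =
      Real.sinh t / t + c / 2 * ((t * Real.cosh t - Real.sinh t) / t ^ 2) := by
  have hd : ∀ v ∈ Set.uIcc (-1 : ℝ) 1,
      HasDerivAt (fun v => Real.exp (t * v) * ((1 / t + c / 2 * (v / t - 1 / t ^ 2)) / 2))
      (Real.exp (t * v) * ((1 + c / 2 * v) / 2)) v := by
    intro v _
    have h1 := ((hasDerivAt_id v).const_mul t).exp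
    have h2 := ((((((hasDerivAt_id v).div_const t).sub_const (1 / t ^ 2)).const_mul (c / 2)).const_add
      (1 / t)).div_const 2)
    refine (h1.mul h2).congr_deriv ?_
    simp only [id]
    field_simp
    ring
  rw [intervalIntegral.integral_eq_sub_of_hasDerivAt hd
    (Continuous.intervalIntegrable (by fun_prop) _ _)]
  rw [Real.sinh_eq, Real.cosh_eq]
  simp only [mul_one, mul_neg]
  field_simp
  ring

/-- For `c ∈ [-2,2]` and `V` with density `(1 + (c/2)v)/2` on `[-1,1]`,
`E e^{tV} ≤ exp(ct/6 + t²/6)` for all `t`. -/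
theorem mgf_bound (c : ℝ) (hc : c ∈ Set.Icc (-2 : ℝ) 2) (t : ℝ) :
    (∫ v in (-1 : ℝ)..1, Real.exp (t * v) * ((1 + c / 2 * v) / 2)) ≤
      Real.exp (c * t / 6 + t ^ 2 / 6) := by
  rcases lt_trichotomy t 0 with h | h | h
  · rw [int_formula c h.ne]
    have := closed_bound (-c) (neg_pos.2 h)
    rw [Real.sinh_neg, Real.cosh_neg] at this
    convert this using 1
    · field_simp
      ring
    · congr 1
      ring
  · subst h
    have hd : ∀ v ∈ Set.uIcc (-1 : ℝ) 1,
        HasDerivAt (fun v => v / 2 + c / 8 * v ^ 2)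
        (Real.exp (0 * v) * ((1 + c / 2 * v) / 2)) v := by
      intro v _
      have := ((hasDerivAt_id v).div_const 2).add ((hasDerivAt_pow 2 v).const_mul (c / 8))
      refine this.congr_deriv ?_
      simp
      ring
    rw [intervalIntegral.integral_eq_sub_of_hasDerivAt hd
      (Continuous.intervalIntegrable (by fun_prop) _ _)]
    norm_num
  · rw [int_formula c h.ne']
    exact closed_bound c h
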